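/- Let s ≥ 1, |z| < 1, and let a₀,…,a_{2s+1}, b₁,…,b_{2s+1} be complex with Re(a₀) > 0 and Re(b_i) > Re(a_i) > 0 for all i. Then J_{2s+1}(a₀,…,a_{2s+1}; b₁,…,b_{2s+1}; z) = (∏_{j=1}^{2s+1} Γ(a_j)Γ(b_j−a_j)/Γ(b_j)) · ∑_{k₁,…,k_{s+1} ≥ 0} z^{k₁+⋯+k_{s+1}} [(a_{2s+1})_{k₁}/k₁!] [(a_{2s})_{k₁}/(b_{2s+1})_{k₁}] ∏_{j=2}^{s+1} [(b_{2s−2j+4} − a_{2s−2j+4})_{k_j}/k_j!] [(a_{2s−2j+3})_{k₁+⋯+k_j}/(b_{2s−2j+3})_{k₁+⋯+k_j}] [(a_{2s−2j+2})_{k₁+⋯+k_j}/(b_{2s−2j+4})_{k₁+⋯+k_j}]. -/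

import Mathlib

open MeasureTheory

/-- Pochhammer symbol `(x)_k = x(x+1)⋯(x+k-1)`. -/
noncomputable def poch (x : ℂ) (k : ℕ) : ℂ := ∏ i ∈ Finset.range k, (x + (i : ℂ))

/-- Generalized hypergeometric series with upper parameters `α`, lower parameters `β`. -/
noncomputable def hyp (α β : List ℂ) (z : ℂ) : ℂ :=
  ∑' k : ℕ, ((α.map fun w => poch w k).prod /
    ((β.map fun w => poch w k).prod * (Nat.factorial k : ℂ))) * z ^ k

/-- Nested expression: `nestR [x₁,…,x_m] = 1 - (1 - (⋯(1 - x_m)x_{m-1}⋯))x₁`. -/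
def nestR : List ℝ → ℝ
  | [] => 1
  | t :: rest => 1 - nestR rest * t

/-- The Vasilyev-type integral `J_m(a₀,…,a_m; b₁,…,b_m; z)`. -/
noncomputable def Jint (m : ℕ) (a b : ℕ → ℂ) (z : ℂ) : ℂ :=
  ∫ x in Set.univ.pi fun _ : Fin m => Set.Ioo (0:ℝ) 1,
    (∏ i : Fin m, ((x i : ℂ) ^ (a (i.1+1) - 1) *
        ((1 - x i : ℝ) : ℂ) ^ (b (i.1+1) - a (i.1+1) - 1))) /
      ((1 - ((nestR (List.ofFn x).tail * (List.ofFn x).headI : ℝ) : ℂ) * z) ^ (a 0))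

/-!
Multiplying out the nesting from the inside shows that `x₁ * nestR [x₂, …, x_{2s+1}]` is a sum of
`s + 1` monomials in the `xᵢ` and `1 - xᵢ`, each nonnegative on the unit cube and with sum at
most `1`. The multivariate binomial series therefore expands `(1 - z * ∑ …) ^ (-a₀)` with a
summable majorant, uniformly in `x`, and may be integrated term by term. Each term gives a product
of Beta integrals with shifted parameters, and Beta integrals shift by Pochhammer symbols.
-/

open scoped Nat

section BinomialSeries

theorem poch_zero (x : ℂ) : poch x 0 = 1 :=
  Finset.prod_range_zero _

theorem poch_eq_ascPochhammer_eval (x : ℂ) (n : ℕ) : poch x n = (ascPochhammer ℂ n).eval x := by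
  induction n with
  | zero => simp [poch]
  | succ n ih => rw [ascPochhammer_succ_eval, ← ih, poch, poch, Finset.prod_range_succ]

theorem hasSum_one_div_one_sub_cpow (a : ℂ) {w : ℂ} (hw : ‖w‖ < 1) :
    HasSum (fun n : ℕ => poch a n / (n ! : ℂ) * w ^ n) (1 / (1 - w) ^ a) := by
  have choose_eq (n : ℕ) : Ring.choose (a + n - 1) n = poch a n / (n ! : ℂ) := by
    rw [← Ring.multichoose_eq, eq_div_iff (mod_cast n.factorial_ne_zero), mul_comm, ← nsmul_eq_mul,
      Ring.factorial_nsmul_multichoose_eq_ascPochhammer,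
      Polynomial.ascPochhammer_smeval_eq_eval, poch_eq_ascPochhammer_eval]
  have hsum := (Complex.one_div_one_sub_cpow_hasFPowerSeriesOnBall_zero a).hasSum (y := w)
    (by simpa [enorm_eq_nnnorm] using! hw)
  simpa [choose_eq, mul_comm] using hsum

variable {ι : Type*} [Fintype ι]

theorem sum_piAntidiag_prod_pow_div_factorial {K : Type*} [Field K] [CharZero K] [DecidableEq ι]
    (w : ι → K) (n : ℕ) :
    ∑ k ∈ Finset.piAntidiag Finset.univ n, ∏ j, w j ^ k j / ((k j)! : K) =
      (∑ j, w j) ^ n / (n ! : K) := by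
  rw [Finset.sum_pow_eq_sum_piAntidiag, Finset.sum_div]
  refine Finset.sum_congr rfl fun k hk => ?_
  have hfact : (∏ j, ((k j)! : K)) * Nat.multinomial Finset.univ k = (n ! : K) := by
    rw [← (Finset.mem_piAntidiag.1 hk).1]
    exact_mod_cast Nat.multinomial_spec Finset.univ k
  have hprod : ∏ j, ((k j)! : K) ≠ 0 :=
    Finset.prod_ne_zero_iff.2 fun j _ => mod_cast (k j).factorial_ne_zero
  have hn : (n ! : K) ≠ 0 := mod_cast n.factorial_ne_zero
  rw [Finset.prod_div_distrib, div_eq_div_iff hprod hn, ← hfact]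
  ring

theorem summable_of_sum_piAntidiag_le [DecidableEq ι] {f : (ι → ℕ) → ℝ} (hf : ∀ k, 0 ≤ f k)
    {g : ℕ → ℝ} (hg : Summable g)
    (hfg : ∀ n, ∑ k ∈ Finset.piAntidiag Finset.univ n, f k ≤ g n) : Summable f := by
  have hg0 (n : ℕ) : 0 ≤ g n := (Finset.sum_nonneg fun k _ => hf k).trans (hfg n)
  refine summable_of_sum_le (c := ∑' n, g n) hf fun u => ?_
  let degree (k : ι → ℕ) : ℕ := ∑ j, k j
  calc ∑ k ∈ u, f k
      = ∑ n ∈ u.image degree, ∑ k ∈ u with degree k = n, f k :=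
        (Finset.sum_fiberwise_of_maps_to (fun _ => Finset.mem_image_of_mem degree) f).symm
    _ ≤ ∑ n ∈ u.image degree, g n := by
        refine Finset.sum_le_sum fun n _ => le_trans ?_ (hfg n)
        refine Finset.sum_le_sum_of_subset_of_nonneg (fun k hk => ?_) fun k _ _ => hf k
        simpa using (Finset.mem_filter.1 hk).2
    _ ≤ ∑' n, g n := hg.sum_le_tsum _ fun n _ => hg0 n

theorem tsum_eq_tsum_sum_piAntidiag {E : Type*} [NormedAddCommGroup E] [CompleteSpace E]
    [DecidableEq ι] {f : (ι → ℕ) → E} (hf : Summable f) :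
    ∑' k, f k = ∑' n, ∑ k ∈ Finset.piAntidiag Finset.univ n, f k := by
  rw [← (hf.hasSum.tsum_fiberwise fun k => ∑ j, k j).tsum_eq]
  refine tsum_congr fun n => ?_
  rw [← Finset.tsum_subtype]
  exact tsum_congr_set_coe f (by ext k; simp)

/-- The term of multidegree `k` in the expansion of `(1 - ∑ j, w j) ^ (-a)` in powers of the `w j`,
namely `(a)_{|k|} ∏ j, w j ^ k j / (k j)!`. -/
noncomputable def binomialTerm (a : ℂ) (w : ι → ℂ) (k : ι → ℕ) : ℂ :=
  poch a (∑ j, k j) * ∏ j, w j ^ k j / ((k j)! : ℂ)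

theorem sum_piAntidiag_binomialTerm [DecidableEq ι] (a : ℂ) (w : ι → ℂ) (n : ℕ) :
    ∑ k ∈ Finset.piAntidiag Finset.univ n, binomialTerm a w k =
      poch a n / (n ! : ℂ) * (∑ j, w j) ^ n := by
  rw [div_mul_eq_mul_div, mul_div_assoc, ← sum_piAntidiag_prod_pow_div_factorial, Finset.mul_sum]
  exact Finset.sum_congr rfl fun k hk => by rw [binomialTerm, (Finset.mem_piAntidiag.1 hk).1]

theorem sum_piAntidiag_norm_binomialTerm [DecidableEq ι] (a : ℂ) (w : ι → ℂ) (n : ℕ) :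
    ∑ k ∈ Finset.piAntidiag Finset.univ n, ‖binomialTerm a w k‖ =
      ‖poch a n / (n ! : ℂ)‖ * (∑ j, ‖w j‖) ^ n := by
  rw [norm_div, Complex.norm_natCast, div_mul_eq_mul_div, mul_div_assoc,
    ← sum_piAntidiag_prod_pow_div_factorial, Finset.mul_sum]
  refine Finset.sum_congr rfl fun k hk => ?_
  simp only [binomialTerm, (Finset.mem_piAntidiag.1 hk).1, norm_mul, norm_prod, norm_div, norm_pow,
    Complex.norm_natCast]

theorem summable_norm_poch_div_factorial_mul_pow (a : ℂ) {r : ℝ} (hr0 : 0 ≤ r) (hr : r < 1) :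
    Summable fun n : ℕ => ‖poch a n / (n ! : ℂ)‖ * r ^ n := by
  have hnorm : ‖(r : ℂ)‖ = r := by rw [Complex.norm_real, Real.norm_of_nonneg hr0]
  simpa only [norm_mul, norm_pow, hnorm] using
    (hasSum_one_div_one_sub_cpow a (hnorm.trans_lt hr)).summable.norm

theorem hasSum_binomialTerm (a : ℂ) {w : ι → ℂ} (hw : ∑ j, ‖w j‖ < 1) :
    HasSum (binomialTerm a w) (1 / (1 - ∑ j, w j) ^ a) := by
  classical
  have hsummable : Summable (binomialTerm a w) :=
    .of_norm <| summable_of_sum_piAntidiag_le (fun _ => norm_nonneg _)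
      (summable_norm_poch_div_factorial_mul_pow a
        (Finset.sum_nonneg fun j _ => norm_nonneg (w j)) hw)
      fun n => (sum_piAntidiag_norm_binomialTerm a w n).le
  rw [hsummable.hasSum_iff, tsum_eq_tsum_sum_piAntidiag hsummable]
  simp only [sum_piAntidiag_binomialTerm]
  exact (hasSum_one_div_one_sub_cpow a ((norm_sum_le _ _).trans_lt hw)).tsum_eq

theorem hasSum_integral_mul_binomialTerm {X : Type*} [MeasurableSpace X] {μ : Measure X}
    {g : X → ℂ} (hg : Integrable g μ) {w : X → ι → ℂ}
    (hw : ∀ j, AEStronglyMeasurable (fun x => w x j) μ) {r : ℝ} (hr0 : 0 ≤ r) (hr : r < 1)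
    (hwr : ∀ᵐ x ∂μ, ∑ j, ‖w x j‖ ≤ r) (a : ℂ) :
    HasSum (fun k : ι → ℕ => ∫ x, g x * binomialTerm a (w x) k ∂μ)
      (∫ x, g x / (1 - ∑ j, w x j) ^ a ∂μ) := by
  classical
  let c (n : ℕ) : ℝ := ‖poch a n / (n ! : ℂ)‖ * r ^ n
  have hdegree : ∀ᵐ x ∂μ, ∀ n,
      ∑ k ∈ Finset.piAntidiag Finset.univ n, ‖binomialTerm a (w x) k‖ ≤ c n := by
    filter_upwards [hwr] with x hx n
    rw [sum_piAntidiag_norm_binomialTerm]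
    exact mul_le_mul_of_nonneg_left
      (pow_le_pow_left₀ (Finset.sum_nonneg fun j _ => norm_nonneg _) hx n) (norm_nonneg _)
  have hint (k : ι → ℕ) : Integrable (fun x => g x * binomialTerm a (w x) k) μ := by
    refine hg.mul_bdd (c := c (∑ j, k j)) ?_ ?_
    · simp only [binomialTerm, div_eq_mul_inv]
      exact (Finset.univ.aestronglyMeasurable_fun_prod fun j _ =>
        ((hw j).pow _).mul_const _).const_mul _
    · filter_upwards [hdegree] with x hx
      exact (Finset.single_le_sum (f := fun k => ‖binomialTerm a (w x) k‖)
        (fun _ _ => norm_nonneg _) (by simp)).trans (hx _)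
  have hsummable : Summable fun k => ∫ x, ‖g x * binomialTerm a (w x) k‖ ∂μ := by
    refine summable_of_sum_piAntidiag_le (fun k => integral_nonneg fun x => norm_nonneg _)
      ((summable_norm_poch_div_factorial_mul_pow a hr0 hr).mul_left (∫ x, ‖g x‖ ∂μ)) fun n => ?_
    rw [← integral_finsetSum _ fun k _ => (hint k).norm, ← integral_mul_const]
    refine integral_mono_ae (integrable_finsetSum _ fun k _ => (hint k).norm)
      (hg.norm.mul_const _) ?_
    filter_upwards [hdegree] with x hx
    simp only [norm_mul, ← Finset.mul_sum]
    exact mul_le_mul_of_nonneg_left (hx n) (norm_nonneg _)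
  have hexpand : ∫ x, g x / (1 - ∑ j, w x j) ^ a ∂μ =
      ∫ x, ∑' k, g x * binomialTerm a (w x) k ∂μ := by
    refine integral_congr_ae ?_
    filter_upwards [hwr] with x hx
    rw [tsum_mul_left, (hasSum_binomialTerm a (hx.trans_lt hr)).tsum_eq, mul_one_div]
  rw [hexpand]
  exact hasSum_integral_of_summable_integral_norm hint hsummable

end BinomialSeries

section BetaIntegral

theorem gamma_add_natCast {x : ℂ} (hx : 0 < x.re) (n : ℕ) :
    Complex.Gamma (x + n) = Complex.Gamma x * poch x n := by
  have hpole (m : ℕ) : x ≠ -m := by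
    rintro rfl
    simp only [Complex.neg_re, Complex.natCast_re] at hx
    linarith [m.cast_nonneg (α := ℝ)]
  rw [poch_eq_ascPochhammer_eval, ← Complex.Gamma_add_nat_div_Gamma_eq x hpole,
    mul_div_cancel₀ _ (Complex.Gamma_ne_zero hpole)]

theorem betaIntegral_add_natCast {u v : ℂ} (hu : 0 < u.re) (hv : 0 < v.re) (m n : ℕ) :
    Complex.betaIntegral (u + m) (v + n) =
      Complex.betaIntegral u v * (poch u m * poch v n / poch (u + v) (m + n)) := by
  have huv : 0 < (u + v).re := add_pos hu hv
  have re_pos_add_natCast {x : ℂ} (hx : 0 < x.re) (n : ℕ) : 0 < (x + n).re := by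
    rw [Complex.add_re, Complex.natCast_re]
    positivity
  rw [Complex.betaIntegral_eq_Gamma_mul_div _ _ (re_pos_add_natCast hu m) (re_pos_add_natCast hv n),
    Complex.betaIntegral_eq_Gamma_mul_div u v hu hv,
    show u + m + (v + n) = u + v + (m + n : ℕ) by push_cast; ring,
    gamma_add_natCast hu, gamma_add_natCast hv, gamma_add_natCast huv]
  ring

/-- The open unit cube, the domain of integration of `Jint`. -/
abbrev openUnitCube (κ : Type*) : Set (κ → ℝ) :=
  Set.univ.pi fun _ => Set.Ioo 0 1

theorem measurableSet_openUnitCube {κ : Type*} [Countable κ] : MeasurableSet (openUnitCube κ) :=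
  .univ_pi fun _ => measurableSet_Ioo

variable {κ : Type*} [Fintype κ]

/-- The integrand of the product of Beta integrals `∏ i, B(u i, v i)` over the unit cube. -/
noncomputable def betaWeight (u v : κ → ℂ) (x : κ → ℝ) : ℂ :=
  ∏ i, ((x i : ℂ) ^ (u i - 1) * ((1 - x i : ℝ) : ℂ) ^ (v i - 1))

/-- The monomial in the `x i` and `1 - x i` with exponent vectors `p` and `q`. -/
def betaMonomial (p q : κ → ℕ) (x : κ → ℝ) : ℝ :=
  ∏ i, (x i ^ p i * (1 - x i) ^ q i)

theorem volume_restrict_openUnitCube :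
    (volume : Measure (κ → ℝ)).restrict (openUnitCube κ) =
      Measure.pi fun _ => volume.restrict (Set.Ioo 0 1) := by
  rw [volume_pi, Measure.restrict_pi_pi]

theorem integrableOn_betaWeight {u v : κ → ℂ} (hu : ∀ i, 0 < (u i).re) (hv : ∀ i, 0 < (v i).re) :
    IntegrableOn (betaWeight u v) (openUnitCube κ) := by
  rw [IntegrableOn, volume_restrict_openUnitCube]
  refine Integrable.fintype_prod (f := fun i (t : ℝ) =>
    (t : ℂ) ^ (u i - 1) * ((1 - t : ℝ) : ℂ) ^ (v i - 1)) fun i => ?_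
  have hbeta := Complex.betaIntegral_convergent (hu i) (hv i)
  rw [intervalIntegrable_iff_integrableOn_Ioo_of_le zero_le_one] at hbeta
  simpa only [IntegrableOn, Complex.ofReal_sub, Complex.ofReal_one] using hbeta

theorem integral_betaWeight (u v : κ → ℂ) :
    ∫ x in openUnitCube κ, betaWeight u v x = ∏ i, Complex.betaIntegral (u i) (v i) := by
  simp only [volume_restrict_openUnitCube, betaWeight]
  rw [integral_fintype_prod_eq_prod (𝕜 := ℂ) (fun i (t : ℝ) =>
    (t : ℂ) ^ (u i - 1) * ((1 - t : ℝ) : ℂ) ^ (v i - 1))]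
  refine Finset.prod_congr rfl fun i _ => ?_
  rw [Complex.betaIntegral, intervalIntegral.integral_of_le zero_le_one,
    integral_Ioc_eq_integral_Ioo]
  simp

theorem betaWeight_mul_betaMonomial (u v : κ → ℂ) (p q : κ → ℕ) {x : κ → ℝ}
    (hx : x ∈ openUnitCube κ) :
    betaWeight u v x * betaMonomial p q x =
      betaWeight (fun i => u i + p i) (fun i => v i + q i) x := by
  simp only [betaWeight, betaMonomial, Complex.ofReal_prod, ← Finset.prod_mul_distrib]
  refine Finset.prod_congr rfl fun i _ => ?_
  obtain ⟨hpos, hlt⟩ := hx i (Set.mem_univ i)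
  have hx0 : (x i : ℂ) ≠ 0 := mod_cast hpos.ne'
  have hx1 : ((1 - x i : ℝ) : ℂ) ≠ 0 := mod_cast (sub_pos.2 hlt).ne'
  rw [add_sub_right_comm, add_sub_right_comm, Complex.cpow_add _ _ hx0, Complex.cpow_add _ _ hx1,
    Complex.cpow_natCast, Complex.cpow_natCast]
  push_cast
  ring

theorem betaMonomial_nonneg (p q : κ → ℕ) {x : κ → ℝ} (hx : x ∈ openUnitCube κ) :
    0 ≤ betaMonomial p q x :=
  Finset.prod_nonneg fun i _ => by
    obtain ⟨hpos, hlt⟩ := hx i (Set.mem_univ i)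
    exact mul_nonneg (pow_nonneg hpos.le _) (pow_nonneg (sub_nonneg.2 hlt.le) _)

theorem continuous_betaMonomial (p q : κ → ℕ) : Continuous (betaMonomial p q) := by
  unfold betaMonomial
  fun_prop

variable {ι : Type*} [Fintype ι]

theorem prod_betaMonomial_pow (p q : ι → κ → ℕ) (k : ι → ℕ) (x : κ → ℝ) :
    ∏ j, betaMonomial (p j) (q j) x ^ k j =
      betaMonomial (fun i => ∑ j, p j i * k j) (fun i => ∑ j, q j i * k j) x := by
  simp only [betaMonomial, ← Finset.prod_pow, mul_pow, ← pow_mul]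
  rw [Finset.prod_comm]
  simp only [Finset.prod_mul_distrib, Finset.prod_pow_eq_pow_sum]

theorem integral_betaWeight_mul_binomialTerm (u v : κ → ℂ) (p q : ι → κ → ℕ) (a z : ℂ)
    (k : ι → ℕ) :
    ∫ x in openUnitCube κ,
        betaWeight u v x * binomialTerm a (fun j => betaMonomial (p j) (q j) x * z) k =
      z ^ (∑ j, k j) * (poch a (∑ j, k j) / ∏ j, ((k j)! : ℂ)) *
        ∏ i, Complex.betaIntegral (u i + (∑ j, p j i * k j : ℕ))
          (v i + (∑ j, q j i * k j : ℕ)) := by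
  rw [← integral_betaWeight, ← integral_const_mul]
  refine setIntegral_congr_fun measurableSet_openUnitCube fun x hx => ?_
  simp only [← betaWeight_mul_betaMonomial u v _ _ hx, ← prod_betaMonomial_pow, binomialTerm,
    mul_pow, Finset.prod_div_distrib, Finset.prod_mul_distrib, Finset.prod_pow_eq_pow_sum,
    Complex.ofReal_prod, Complex.ofReal_pow]
  ring

theorem hasSum_integral_betaWeight_div_cpow {u v : κ → ℂ} (hu : ∀ i, 0 < (u i).re)
    (hv : ∀ i, 0 < (v i).re) {p q : ι → κ → ℕ}
    (hpq : ∀ x ∈ openUnitCube κ, ∑ j, betaMonomial (p j) (q j) x ≤ 1) (a : ℂ) {z : ℂ}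
    (hz : ‖z‖ < 1) :
    HasSum (fun k : ι → ℕ => (∏ i, Complex.betaIntegral (u i) (v i)) *
        (z ^ (∑ j, k j) * (poch a (∑ j, k j) / ∏ j, ((k j)! : ℂ)) *
          ∏ i, (poch (u i) (∑ j, p j i * k j) * poch (v i) (∑ j, q j i * k j) /
            poch (u i + v i) (∑ j, p j i * k j + ∑ j, q j i * k j))))
      (∫ x in openUnitCube κ,
        betaWeight u v x / (1 - ((∑ j, betaMonomial (p j) (q j) x : ℝ) : ℂ) * z) ^ a) := by
  have hbound : ∀ᵐ x ∂volume.restrict (openUnitCube κ),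
      ∑ j, ‖(betaMonomial (p j) (q j) x : ℂ) * z‖ ≤ ‖z‖ := by
    filter_upwards [ae_restrict_mem measurableSet_openUnitCube] with x hx
    simp only [norm_mul, Complex.norm_real, Real.norm_of_nonneg (betaMonomial_nonneg _ _ hx),
      ← Finset.sum_mul]
    exact mul_le_of_le_one_left (norm_nonneg z) (hpq x hx)
  convert hasSum_integral_mul_binomialTerm (integrableOn_betaWeight hu hv)
    (fun j => ((Complex.continuous_ofReal.comp
      (continuous_betaMonomial (p j) (q j))).mul_const z).aestronglyMeasurable)
    (norm_nonneg z) hz hbound a using 2 with k x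
  · simp only [Function.comp_apply, integral_betaWeight_mul_binomialTerm,
      betaIntegral_add_natCast (hu _) (hv _), Finset.prod_mul_distrib]
    ring
  · simp only [Complex.ofReal_sum, Finset.sum_mul, Function.comp_apply]

end BetaIntegral

section OddMultisum

theorem nestR_mem_Icc {l : List ℝ} (hl : ∀ t ∈ l, t ∈ Set.Icc (0 : ℝ) 1) :
    nestR l ∈ Set.Icc (0 : ℝ) 1 := by
  induction l with
  | nil => simp [nestR]
  | cons t l ih =>
    obtain ⟨ht, hl⟩ := List.forall_mem_cons.1 hl
    exact Set.Icc.mem_iff_one_sub_mem.1 (unitInterval.mul_mem (ih hl) ht)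

/-- The exponent of `x i` in the `j`-th monomial `x 0 * ⋯ * x (2s - 2j) * (1 - x (2s - 2j + 1))` of
`x 0 * nestR [x 1, …, x (2s)]`, the last factor being absent for `j = 0`. Variables are counted
from `0` here and from `1` in the parameters of `Jint`. -/
def layerExponent (s j i : ℕ) : ℕ := if 2 * j + i ≤ 2 * s then 1 else 0

/-- The exponent of `1 - x i` in the `j`-th monomial of
`x 0 * nestR [x 1, …, x (2s)]`, see `layerExponent`. -/
def layerCoexponent (s j i : ℕ) : ℕ := if 2 * j + i = 2 * s + 1 then 1 else 0

theorem layerExponent_succ_add_two (s j i : ℕ) :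
    layerExponent (s + 1) j (i + 2) = layerExponent s j i := by
  simp only [layerExponent]
  congr 1
  grind

theorem layerCoexponent_succ_add_two (s j i : ℕ) :
    layerCoexponent (s + 1) j (i + 2) = layerCoexponent s j i := by
  simp only [layerCoexponent]
  congr 1
  grind

theorem layerExponent_zero_of_le {s j : ℕ} (h : j ≤ s) : layerExponent s j 0 = 1 :=
  if_pos (by omega)

theorem layerCoexponent_zero (s j : ℕ) : layerCoexponent s j 0 = 0 :=
  if_neg (by omega)

theorem layerExponent_one_of_lt {s j : ℕ} (h : j < s) : layerExponent s j 1 = 1 :=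
  if_pos (by omega)

theorem layerCoexponent_one_of_lt {s j : ℕ} (h : j < s) : layerCoexponent s j 1 = 0 :=
  if_neg (by omega)

theorem layerExponent_self_succ (s i : ℕ) : layerExponent s s (i + 1) = 0 :=
  if_neg (by omega)

theorem layerCoexponent_self_one (s : ℕ) : layerCoexponent s s 1 = 1 :=
  if_pos rfl

theorem layerCoexponent_self_add_two (s i : ℕ) : layerCoexponent s s (i + 2) = 0 :=
  if_neg (by omega)

/-- The `j`-th monomial of `x 0 * nestR [x 1, …, x (2s)]`, for `0 ≤ j ≤ s`. -/
def layer (s j : ℕ) (x : Fin (2 * s + 1) → ℝ) : ℝ :=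
  betaMonomial (fun i : Fin (2 * s + 1) => layerExponent s j i)
    (fun i : Fin (2 * s + 1) => layerCoexponent s j i) x

theorem layer_succ_of_le {s j : ℕ} (h : j ≤ s) (x : Fin (2 * s + 1 + 1 + 1) → ℝ) :
    layer (s + 1) j x = x 0 * x 1 * layer s j fun i => x i.succ.succ := by
  change ∏ i : Fin (2 * s + 1 + 1 + 1),
    (x i ^ layerExponent (s + 1) j i * (1 - x i) ^ layerCoexponent (s + 1) j i) = _
  rw [Fin.prod_univ_succ, Fin.prod_univ_succ]
  simp [layer, betaMonomial, layerExponent_succ_add_two, layerCoexponent_succ_add_two,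
    layerCoexponent_zero, layerExponent_zero_of_le (h.trans s.le_succ),
    layerExponent_one_of_lt (Nat.lt_succ_of_le h), layerCoexponent_one_of_lt (Nat.lt_succ_of_le h),
    mul_assoc]

theorem layer_succ_self (s : ℕ) (x : Fin (2 * s + 1 + 1 + 1) → ℝ) :
    layer (s + 1) (s + 1) x = x 0 * (1 - x 1) := by
  change ∏ i : Fin (2 * s + 1 + 1 + 1),
    (x i ^ layerExponent (s + 1) (s + 1) i * (1 - x i) ^ layerCoexponent (s + 1) (s + 1) i) = _
  rw [Fin.prod_univ_succ, Fin.prod_univ_succ]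
  simp [layerExponent_self_succ, layerExponent_zero_of_le, layerCoexponent_zero,
    layerCoexponent_self_one, layerCoexponent_self_add_two]

theorem sum_layer_eq_nestR_mul (s : ℕ) (x : Fin (2 * s + 1) → ℝ) :
    ∑ j : Fin (s + 1), layer s j x = nestR (List.ofFn x).tail * (List.ofFn x).headI := by
  induction s with
  | zero => simp [layer, betaMonomial, layerExponent, layerCoexponent, nestR]
  | succ s ih =>
    have ih := ih fun i => x i.succ.succ
    rw [Fin.sum_univ_castSucc]
    simp only [Fin.val_castSucc, Fin.val_last, layer_succ_self,
      layer_succ_of_le (Nat.le_of_lt_succ (Fin.is_lt _)), ← Finset.mul_sum, ih]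
    simp only [List.ofFn_succ, Fin.succ_zero_eq_one, Fin.succ_one_eq_two, List.tail_cons,
      List.headI_cons, Nat.mul_eq, nestR]
    ring

/-- The summand of the multisum for `J_{2s+1}`, without the factor
`∏ j, Γ(a_j) Γ(b_j - a_j) / Γ(b_j)`. -/
noncomputable def oddSummand (s : ℕ) (z : ℂ) (a b : ℕ → ℂ) (k : Fin (s + 1) → ℕ) : ℂ :=
  z ^ (∑ j, k j) *
    ((poch (a (2*s+1)) (k 0) / (Nat.factorial (k 0) : ℂ)) *
      (poch (a (2*s)) (k 0) / poch (b (2*s+1)) (k 0))) *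
    ∏ j : Fin s,
      (poch (b (2*s - 2*j.1) - a (2*s - 2*j.1)) (k j.succ) /
        (Nat.factorial (k j.succ) : ℂ)) *
      (poch (a (2*s - 2*j.1 - 1)) (∑ i ∈ Finset.Iic j.succ, k i) /
        poch (b (2*s - 2*j.1 - 1)) (∑ i ∈ Finset.Iic j.succ, k i)) *
      (poch (a (2*s - 2*j.1 - 2)) (∑ i ∈ Finset.Iic j.succ, k i) /
        poch (b (2*s - 2*j.1)) (∑ i ∈ Finset.Iic j.succ, k i))

theorem oddSummand_succ (s : ℕ) (z : ℂ) (a b : ℕ → ℂ) (k : Fin (s + 2) → ℕ) :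
    oddSummand (s + 1) z a b k =
      oddSummand s z (fun i => a (i + 2)) (fun i => b (i + 2)) (fun j => k j.castSucc) *
        (z ^ k (Fin.last _) * (poch (b 2 - a 2) (k (Fin.last _)) / ((k (Fin.last _))! : ℂ)) *
          (poch (a 1) (∑ j, k j) / poch (b 1) (∑ j, k j)) *
          (poch (a 0) (∑ j, k j) / poch (b 2) (∑ j, k j))) := by
  have hmul : 2 * (s + 1) = 2 * s + 2 := mul_add_one 2 s
  have hshift (j : Fin s) :
      2 * s + 2 - 2 * j.1 = 2 * s - 2 * j.1 + 2 ∧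
      2 * s - 2 * j.1 + 2 - 1 = 2 * s - 2 * j.1 - 1 + 2 ∧
      2 * s - 2 * j.1 + 2 - 2 = 2 * s - 2 * j.1 - 2 + 2 := by omega
  have hlast : 2 * s + 2 - 2 * s = 2 := Nat.add_sub_cancel_left _ _
  have hIic (j : Fin (s + 1)) :
      ∑ i ∈ Finset.Iic j.castSucc, k i = ∑ i ∈ Finset.Iic j, k i.castSucc := by
    rw [Fin.sum_Iic_castSucc]
  have hIic_last : ∑ i ∈ Finset.Iic (Fin.last (s + 1)), k i = ∑ i, k i := by
    rw [← Fin.top_eq_last, Finset.Iic_top]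
  simp only [oddSummand, Fin.prod_univ_castSucc (n := s), Fin.val_castSucc, Fin.val_last,
    (hshift _).1, (hshift _).2.1, (hshift _).2.2, hlast, Nat.reduceSub, Fin.succ_castSucc, hIic,
    Fin.succ_last, Nat.succ_eq_add_one, hIic_last, Fin.castSucc_zero, Fin.sum_univ_castSucc k,
    pow_add, hmul, add_right_comm _ 1 2]
  ring

theorem sum_layerExponent_zero (s : ℕ) (k : Fin (s + 1) → ℕ) :
    ∑ j : Fin (s + 1), layerExponent s j 0 * k j = ∑ j, k j := by
  simp only [layerExponent_zero_of_le (Nat.le_of_lt_succ (Fin.is_lt _)), one_mul]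

theorem sum_layerCoexponent_zero (s : ℕ) (k : Fin (s + 1) → ℕ) :
    ∑ j : Fin (s + 1), layerCoexponent s j 0 * k j = 0 := by
  simp only [layerCoexponent_zero, zero_mul, Finset.sum_const_zero]

theorem sum_layerExponent_succ_one (s : ℕ) (k : Fin (s + 2) → ℕ) :
    ∑ j : Fin (s + 2), layerExponent (s + 1) j 1 * k j = ∑ j : Fin (s + 1), k j.castSucc := by
  simp only [Fin.sum_univ_castSucc (n := s + 1), Fin.val_castSucc, Fin.val_last,
    layerExponent_one_of_lt (Fin.is_lt _), layerExponent_self_succ, one_mul, zero_mul, add_zero]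

theorem sum_layerCoexponent_succ_one (s : ℕ) (k : Fin (s + 2) → ℕ) :
    ∑ j : Fin (s + 2), layerCoexponent (s + 1) j 1 * k j = k (Fin.last _) := by
  simp only [Fin.sum_univ_castSucc (n := s + 1), Fin.val_castSucc, Fin.val_last,
    layerCoexponent_one_of_lt (Fin.is_lt _), layerCoexponent_self_one, zero_mul, one_mul,
    Finset.sum_const_zero, zero_add]

theorem sum_layerExponent_succ_add_two (s i : ℕ) (k : Fin (s + 2) → ℕ) :
    ∑ j : Fin (s + 2), layerExponent (s + 1) j (i + 2) * k j =
      ∑ j : Fin (s + 1), layerExponent s j i * k j.castSucc := by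
  rw [Fin.sum_univ_castSucc, Fin.val_last, layerExponent_self_succ, zero_mul, add_zero]
  simp only [Fin.val_castSucc, layerExponent_succ_add_two]

theorem sum_layerCoexponent_succ_add_two (s i : ℕ) (k : Fin (s + 2) → ℕ) :
    ∑ j : Fin (s + 2), layerCoexponent (s + 1) j (i + 2) * k j =
      ∑ j : Fin (s + 1), layerCoexponent s j i * k j.castSucc := by
  rw [Fin.sum_univ_castSucc, Fin.val_last, layerCoexponent_self_add_two, zero_mul, add_zero]
  simp only [Fin.val_castSucc, layerCoexponent_succ_add_two]

theorem prod_poch_layerExponent_eq_oddSummand (s : ℕ) (z : ℂ) (a b : ℕ → ℂ)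
    (k : Fin (s + 1) → ℕ) :
    z ^ (∑ j, k j) * (poch (a 0) (∑ j, k j) / ∏ j, ((k j)! : ℂ)) *
        ∏ i ∈ Finset.range (2 * s + 1),
          (poch (a (i + 1)) (∑ j : Fin (s + 1), layerExponent s j i * k j) *
            poch (b (i + 1) - a (i + 1)) (∑ j : Fin (s + 1), layerCoexponent s j i * k j) /
            poch (b (i + 1)) (∑ j : Fin (s + 1), layerExponent s j i * k j +
              ∑ j : Fin (s + 1), layerCoexponent s j i * k j)) =
      oddSummand s z a b k := by
  induction s generalizing a b with
  | zero =>
    simp only [oddSummand, mul_zero, zero_add, Finset.prod_range_one,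
      Fin.sum_univ_succ (n := 0), Fin.prod_univ_succ (n := 0), Fin.val_zero,
      layerExponent_zero_of_le le_rfl, layerCoexponent_zero, one_mul, zero_mul,
      Finset.univ_eq_empty, Finset.sum_empty, Finset.prod_empty, poch_zero, add_zero, mul_one]
    ring
  | succ s ih =>
    rw [oddSummand_succ, ← ih, show 2 * (s + 1) + 1 = 2 * s + 1 + 1 + 1 from rfl,
      Finset.prod_range_succ', Finset.prod_range_succ']
    simp only [Fin.prod_univ_castSucc (n := s + 1), sum_layerExponent_zero,
      sum_layerCoexponent_zero, zero_add, sum_layerExponent_succ_one, sum_layerCoexponent_succ_one,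
      sum_layerExponent_succ_add_two, sum_layerCoexponent_succ_add_two, Fin.sum_univ_castSucc k,
      pow_add z, poch_zero, add_zero, add_right_comm _ 1 2, one_add_one_eq_two]
    ring

theorem sum_layer_le_one (s : ℕ) {x : Fin (2 * s + 1) → ℝ}
    (hx : x ∈ openUnitCube (Fin (2 * s + 1))) : ∑ j : Fin (s + 1), layer s j x ≤ 1 := by
  have hmem (i : Fin (2 * s + 1)) : x i ∈ Set.Icc 0 1 := Set.Ioo_subset_Icc_self (hx i trivial)
  obtain ⟨-, htail⟩ := nestR_mem_Icc (l := List.ofFn fun i : Fin (2 * s) => x i.succ)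
    (by simpa only [List.forall_mem_ofFn_iff] using fun i : Fin (2 * s) => hmem i.succ)
  rw [sum_layer_eq_nestR_mul, List.ofFn_succ]
  exact mul_le_one₀ htail (hmem 0).1 (hmem 0).2

theorem Jint_eq_integral_betaWeight (s : ℕ) (a b : ℕ → ℂ) (z : ℂ) :
    Jint (2 * s + 1) a b z =
      ∫ x in openUnitCube (Fin (2 * s + 1)),
        betaWeight (fun i : Fin (2 * s + 1) => a (i + 1)) (fun i => b (i + 1) - a (i + 1)) x /
          (1 - ((∑ j : Fin (s + 1), layer s j x : ℝ) : ℂ) * z) ^ a 0 := by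
  simp only [sum_layer_eq_nestR_mul]
  rfl

theorem prod_betaIntegral_eq_prod_Icc {n : ℕ} {a b : ℕ → ℂ}
    (hab : ∀ i : ℕ, 1 ≤ i → i ≤ n → (a i).re < (b i).re ∧ 0 < (a i).re) :
    ∏ i : Fin n, Complex.betaIntegral (a (i + 1)) (b (i + 1) - a (i + 1)) =
      ∏ j ∈ Finset.Icc 1 n,
        Complex.Gamma (a j) * Complex.Gamma (b j - a j) / Complex.Gamma (b j) := by
  rw [← Finset.Ico_add_one_right_eq_Icc, Finset.prod_Ico_eq_prod_range, Finset.prod_range]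
  refine Finset.prod_congr rfl fun i _ => ?_
  obtain ⟨hlt, hpos⟩ := hab (i + 1) (Nat.le_add_left 1 i) i.is_lt
  rw [Complex.betaIntegral_eq_Gamma_mul_div _ _ hpos (by simpa using hlt), add_sub_cancel,
    add_comm 1]

theorem J_odd_multisum_general (s : ℕ) {z : ℂ} (hz : ‖z‖ < 1) (a b : ℕ → ℂ)
    (hab : ∀ i : ℕ, 1 ≤ i → i ≤ 2 * s + 1 → (a i).re < (b i).re ∧ 0 < (a i).re) :
    HasSum (fun k : Fin (s + 1) → ℕ =>
        (∏ j ∈ Finset.Icc 1 (2 * s + 1),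
          Complex.Gamma (a j) * Complex.Gamma (b j - a j) / Complex.Gamma (b j)) *
        oddSummand s z a b k)
      (Jint (2 * s + 1) a b z) := by
  have hab_re (i : Fin (2 * s + 1)) := hab (i + 1) (Nat.le_add_left 1 i) i.is_lt
  have hb_sub_a_re (i : Fin (2 * s + 1)) : 0 < (b (i + 1) - a (i + 1)).re := by
    rw [Complex.sub_re]
    exact sub_pos.2 (hab_re i).1
  rw [Jint_eq_integral_betaWeight, ← prod_betaIntegral_eq_prod_Icc hab]
  simp only [← prod_poch_layerExponent_eq_oddSummand, Finset.prod_range]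
  simpa only [add_sub_cancel] using!
    hasSum_integral_betaWeight_div_cpow (fun i => (hab_re i).2) hb_sub_a_re
      (fun x hx => sum_layer_le_one s hx) (a 0) hz

end OddMultisum

/-- the multisum expansion of the Vasilyev-type integral, odd case. -/
theorem J_odd_multisum (s : ℕ) (hs : 1 ≤ s) (z : ℂ) (hz : ‖z‖ < 1) (a b : ℕ → ℂ)
    (ha0 : 0 < (a 0).re)
    (hab : ∀ i : ℕ, 1 ≤ i → i ≤ 2*s+1 → (a i).re < (b i).re ∧ 0 < (a i).re) :
    Jint (2*s+1) a b z =
      (∏ j ∈ Finset.Icc 1 (2*s+1),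
        Complex.Gamma (a j) * Complex.Gamma (b j - a j) / Complex.Gamma (b j)) *
      ∑' k : Fin (s+1) → ℕ, z ^ (∑ j, k j) *
        ((poch (a (2*s+1)) (k 0) / (Nat.factorial (k 0) : ℂ)) *
          (poch (a (2*s)) (k 0) / poch (b (2*s+1)) (k 0))) *
        ∏ j : Fin s,
          (poch (b (2*s - 2*j.1) - a (2*s - 2*j.1)) (k j.succ) /
            (Nat.factorial (k j.succ) : ℂ)) *
          (poch (a (2*s - 2*j.1 - 1)) (∑ i ∈ Finset.Iic j.succ, k i) /
            poch (b (2*s - 2*j.1 - 1)) (∑ i ∈ Finset.Iic j.succ, k i)) *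
          (poch (a (2*s - 2*j.1 - 2)) (∑ i ∈ Finset.Iic j.succ, k i) /
            poch (b (2*s - 2*j.1)) (∑ i ∈ Finset.Iic j.succ, k i)) := by
  rw [← tsum_mul_left]
  exact (J_odd_multisum_general s hz a b hab).tsum_eq.symm
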